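/- Let F be a linearly closed differential field of characteristic zero with derivation ∂ and constants C = {c ∈ F : ∂c = 0}, and let M : F^ℓ → F^m be an m×ℓ matrix differential operator over F, i.e., (Mu)_i = Σ_{j=1}^ℓ Σ_{n≥0} a_{ij,n} ∂^n u_j for 1 ≤ i ≤ m, with a_{ij,n} ∈ F, finitely many nonzero. If the kernel {u ∈ F^ℓ : Mu = 0} is finite-dimensional over C and the image M(F^ℓ) has finite codimension over C in F^m, then necessarily m = ℓ. -/

import Mathlib

/-- A derivation on a field: an additive map satisfying the Leibniz rule. -/
structure IsDerivation {F : Type*} [Field F] (d : F → F) : Prop where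
  map_add : ∀ a b : F, d (a + b) = d a + d b
  leibniz : ∀ a b : F, d (a * b) = d a * b + a * d b

/-- A differential field `(F, d)` is linearly closed if every linear differential equation
`a_M d^M u + ⋯ + a_1 d u + a_0 u = b` with `a_M ≠ 0` has a solution in `F`,
and has a nonzero solution for `b = 0`, provided that `M ≥ 1`. -/
def LinearlyClosed {F : Type*} [Field F] (d : F → F) : Prop :=
  ∀ (M : ℕ) (a : ℕ → F), a M ≠ 0 →
    (∀ b : F, ∃ u : F, ∑ n ∈ Finset.range (M + 1), a n * d^[n] u = b) ∧
    (1 ≤ M → ∃ u : F, u ≠ 0 ∧ ∑ n ∈ Finset.range (M + 1), a n * d^[n] u = 0)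

/-- The `m×ℓ` matrix differential operator with coefficients `a i j n` (nonzero only for
`n ≤ N`): `(Mu)_i = Σ_j Σ_{n=0}^N a_{ij,n} d^n (u j)`. -/
noncomputable def rectDiffOp {F : Type*} [Field F] (d : F → F) {m l : ℕ} (N : ℕ)
    (a : Fin m → Fin l → ℕ → F) (u : Fin l → F) : Fin m → F :=
  fun i => ∑ j, ∑ n ∈ Finset.range (N + 1), a i j n * d^[n] (u j)

/-!
Write `R` for the ring of differential operators over `F`, filtered by order. As a left `F`-vector
space, and also as a right one, the operators of order at most `n` have dimension `n + 1`.
Multiplication by an `m × ℓ` matrix of operators of order at most `N` raises orders by at most `N`,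
so comparing `m (n + 1)` with `ℓ (n + N + 1)` for large `n` yields a nonzero row `x` with `x M = 0`
if `ℓ < m`, and likewise a nonzero column `x` with `M x = 0` if `m < ℓ`. Nonzero operators are
surjective on `F`. Hence in the first case `x` maps the cokernel of `M` onto `F`, and in the second
case a coordinate maps the kernel of `M` onto `F`; but `F` is infinite-dimensional over `C`, because
`∂` is surjective and kills `1`.
-/

section FilteredSpace

variable {K V : Type*} [DivisionRing K] [AddCommGroup V] [Module K V]

theorem linearIndependent_of_notMem_span_Iio {ι : Type*} [LinearOrder ι] {v : ι → V}
    (hv : ∀ i, v i ∉ Submodule.span K (v '' Set.Iio i)) : LinearIndependent K v := by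
  refine linearIndependent_iff_finset_linearIndependent.mpr fun s => ?_
  change LinearIndepOn K v (s : Set ι)
  induction s using Finset.induction_on_max with
  | empty => simp
  | insert i s hi ih =>
    rw [Finset.coe_insert]
    exact ih.insert fun hmem => hv i (Submodule.span_mono (Set.image_mono hi) hmem)

theorem finrank_span_image_Iic {v : ℕ → V} (hv : LinearIndependent K v) (n : ℕ) :
    Module.finrank K (Submodule.span K (v '' Set.Iic n)) = n + 1 := by
  have hv_Iic : LinearIndependent K fun k : Set.Iic n => v k := hv.comp _ Subtype.val_injective
  rw [Set.image_eq_range, finrank_span_eq_card hv_Iic]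
  simp

theorem exists_ne_zero_map_eq_zero_of_card_lt {ι κ : Type*} [Fintype ι] [Fintype κ] {v : ℕ → V}
    (hv : LinearIndependent K v) (hcard : Fintype.card κ < Fintype.card ι)
    {T : (ι → V) → κ → V} (hlin : IsLinearMap K T) (N : ℕ)
    (hT : ∀ n x, (∀ i, x i ∈ Submodule.span K (v '' Set.Iic n)) →
      ∀ j, T x j ∈ Submodule.span K (v '' Set.Iic (n + N))) :
    ∃ x : ι → V, x ≠ 0 ∧ (∃ n, ∀ i, x i ∈ Submodule.span K (v '' Set.Iic n)) ∧ T x = 0 := by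
  let W (n : ℕ) : Submodule K V := Submodule.span K (v '' Set.Iic n)
  have finite_W (n : ℕ) : FiniteDimensional K (W n) :=
    FiniteDimensional.span_of_finite K ((Set.finite_Iic n).image v)
  let n := Fintype.card κ * N
  let T' : (ι → W n) →ₗ[K] κ → W (n + N) :=
    LinearMap.pi fun j =>
      (LinearMap.proj j ∘ₗ hlin.mk' T ∘ₗ (W n).subtype.compLeft ι).codRestrict (W (n + N))
        fun x => hT n _ (fun i => (x i).2) j
  have finrank_lt : Module.finrank K (κ → W (n + N)) < Module.finrank K (ι → W n) := by
    simp only [Module.finrank_pi_fintype, W, finrank_span_image_Iic hv, Finset.sum_const,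
      Finset.card_univ, smul_eq_mul]
    calc Fintype.card κ * (n + N + 1) < (Fintype.card κ + 1) * (n + 1) := by simp only [n]; linarith
      _ ≤ Fintype.card ι * (n + 1) := Nat.mul_le_mul_right _ hcard
  obtain ⟨x, hx, hx0⟩ :=
    Submodule.exists_mem_ne_zero_of_ne_bot (LinearMap.ker_ne_bot_of_finrank_lt (f := T') finrank_lt)
  exact ⟨fun i => x i, fun h => hx0 (funext fun i => Subtype.ext (congrFun h i)),
    ⟨n, fun i => (x i).2⟩,
    funext fun j => congrArg Subtype.val (congrFun (LinearMap.mem_ker.mp hx) j)⟩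

end FilteredSpace

section OrderFiltration

variable {R A : Type*} [CommRing R] [CommRing A] [Algebra R A]

/-- The differential operators of order at most `n` in the derivation `D`, as the span of
`1, D, …, D ^ n`. The scalars `S` are `A` for combinations `∑ a_k D ^ k`, with coefficients on the
left, and `Aᵈᵐᵃ` for `∑ D ^ k a_k`, with coefficients on the right. -/
def diffOpLE (S : Type*) [Semiring S] [Module S (Module.End R A)] (D : Derivation R A A) (n : ℕ) :
    Submodule S (Module.End R A) :=
  Submodule.span S (((D : Module.End R A) ^ ·) '' Set.Iic n)

section Scalars

variable {S : Type*} [Semiring S] [Module S (Module.End R A)] {D : Derivation R A A}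

theorem pow_mem_diffOpLE {k n : ℕ} (h : k ≤ n) : (D : Module.End R A) ^ k ∈ diffOpLE S D n :=
  Submodule.subset_span ⟨k, h, rfl⟩

theorem diffOpLE_mono {m n : ℕ} (h : m ≤ n) : diffOpLE S D m ≤ diffOpLE S D n :=
  Submodule.span_mono (Set.image_mono (Set.Iic_subset_Iic.mpr h))

end Scalars

variable {D : Derivation R A A}

theorem derivation_mul_smul (a : A) (P : Module.End R A) :
    (D : Module.End R A) * (a • P) = a • ((D : Module.End R A) * P) + D a • P := by
  ext u
  simp [mul_comm]

theorem derivation_mul_mem_diffOpLE {P : Module.End R A} {n : ℕ} (hP : P ∈ diffOpLE A D n) :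
    (D : Module.End R A) * P ∈ diffOpLE A D (n + 1) := by
  induction hP using Submodule.span_induction with
  | mem P hP =>
    obtain ⟨k, hk, rfl⟩ := hP
    simpa only [← pow_succ'] using pow_mem_diffOpLE (Nat.succ_le_succ hk)
  | zero => simp
  | add P Q _ _ hP hQ => simpa only [mul_add] using add_mem hP hQ
  | smul a P hmem hP =>
    rw [derivation_mul_smul]
    exact add_mem (Submodule.smul_mem _ _ hP)
      (Submodule.smul_mem _ _ (diffOpLE_mono n.le_succ hmem))

theorem mul_mem_diffOpLE {P Q : Module.End R A} {m n : ℕ} (hP : P ∈ diffOpLE A D m)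
    (hQ : Q ∈ diffOpLE A D n) : P * Q ∈ diffOpLE A D (m + n) := by
  have pow_mul_mem (k : ℕ) : (D : Module.End R A) ^ k * Q ∈ diffOpLE A D (k + n) := by
    induction k with
    | zero => simpa using hQ
    | succ k ih =>
      rw [pow_succ', mul_assoc, Nat.succ_add]
      exact derivation_mul_mem_diffOpLE ih
  induction hP using Submodule.span_induction with
  | mem P hP =>
    obtain ⟨k, hk, rfl⟩ := hP
    exact diffOpLE_mono (Nat.add_le_add_right hk n) (pow_mul_mem k)
  | zero => simp
  | add P₁ P₂ _ _ h₁ h₂ => simpa only [add_mul] using add_mem h₁ h₂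
  | smul a P _ h => simpa only [smul_mul_assoc] using Submodule.smul_mem _ a h

theorem domMulAct_smul_mem_diffOpLE (c : Aᵈᵐᵃ) {P : Module.End R A} {n : ℕ}
    (hP : P ∈ diffOpLE A D n) : c • P ∈ diffOpLE A D n := by
  have one_mem : (1 : Module.End R A) ∈ diffOpLE A D 0 := by
    rw [← pow_zero (D : Module.End R A)]
    exact pow_mem_diffOpLE le_rfl
  have smul_one_mem := Submodule.smul_mem _ (DomMulAct.mk.symm c) one_mem
  have smul_eq_mul : c • P = P * (DomMulAct.mk.symm c • (1 : Module.End R A)) := by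
    ext u
    simp [DomMulAct.smul_linearMap_apply]
  rw [smul_eq_mul, ← add_zero n]
  exact mul_mem_diffOpLE hP smul_one_mem

theorem derivation_mul_mem_diffOpLE_domMulAct {P : Module.End R A} {n : ℕ}
    (hP : P ∈ diffOpLE Aᵈᵐᵃ D n) : (D : Module.End R A) * P ∈ diffOpLE Aᵈᵐᵃ D (n + 1) := by
  induction hP using Submodule.span_induction with
  | mem P hP =>
    obtain ⟨k, hk, rfl⟩ := hP
    simpa only [← pow_succ'] using pow_mem_diffOpLE (Nat.succ_le_succ hk)
  | zero => simp
  | add P Q _ _ hP hQ => simpa only [mul_add] using add_mem hP hQ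
  | smul c P _ hP => exact Submodule.smul_mem _ c hP

theorem smul_pow_mem_diffOpLE_domMulAct (a : A) (k : ℕ) :
    a • (D : Module.End R A) ^ k ∈ diffOpLE Aᵈᵐᵃ D k := by
  induction k generalizing a with
  | zero =>
    have smul_one_eq : a • (1 : Module.End R A) = DomMulAct.mk a • 1 := by ext; simp
    rw [pow_zero, smul_one_eq]
    exact Submodule.smul_mem _ _ (pow_mem_diffOpLE le_rfl)
  | succ k ih =>
    rw [pow_succ', eq_sub_of_add_eq (derivation_mul_smul a _).symm]
    exact sub_mem (derivation_mul_mem_diffOpLE_domMulAct (ih a))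
      (diffOpLE_mono k.le_succ (ih (D a)))

theorem mem_diffOpLE_domMulAct_iff {P : Module.End R A} {n : ℕ} :
    P ∈ diffOpLE Aᵈᵐᵃ D n ↔ P ∈ diffOpLE A D n := by
  refine ⟨fun hP => ?_, fun hP => ?_⟩
  · induction hP using Submodule.span_induction with
    | mem P hP => exact Submodule.subset_span hP
    | zero => exact zero_mem _
    | add P Q _ _ hP hQ => exact add_mem hP hQ
    | smul c P _ hP => exact domMulAct_smul_mem_diffOpLE c hP
  · rw [diffOpLE, Submodule.mem_span_iff_exists_finset_subset] at hP
    obtain ⟨f, t, ht, -, rfl⟩ := hP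
    refine sum_mem fun P hP => ?_
    obtain ⟨k, hk, rfl⟩ := ht hP
    exact diffOpLE_mono hk (smul_pow_mem_diffOpLE_domMulAct _ k)

end OrderFiltration

section LinearlySurjective

instance {K : Type*} [Field K] : Field Kᵈᵐᵃ :=
  { (inferInstance : CommRing Kᵈᵐᵃ), (inferInstance : Field Kᵐᵒᵖ) with }

/-- A differential field `(F, d)` is linearly surjective if every equation
`a_M d^M u + ⋯ + a_1 d u + a_0 u = b` with `a_M ≠ 0` has a solution in `F`. This is the
inhomogeneous half of `LinearlyClosed`. -/
def LinearlySurjective {F : Type*} [Field F] (d : F → F) : Prop :=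
  ∀ (M : ℕ) (a : ℕ → F), a M ≠ 0 →
    ∀ b : F, ∃ u : F, ∑ n ∈ Finset.range (M + 1), a n * d^[n] u = b

theorem LinearlyClosed.linearlySurjective {F : Type*} [Field F] {d : F → F}
    (hd : LinearlyClosed d) : LinearlySurjective d :=
  fun M a ha => (hd M a ha).1

namespace LinearlySurjective

variable {C F : Type*} [CommRing C] [Field F] [Algebra C F] {D : Derivation C F F}

theorem surjective_linearCombination (hD : LinearlySurjective D) {a : ℕ →₀ F} (ha : a ≠ 0) :
    Function.Surjective (Finsupp.linearCombination F ((D : Module.End C F) ^ ·) a) := by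
  let M := a.support.max' (Finsupp.support_nonempty_iff.mpr ha)
  have ha_M : a M ≠ 0 := Finsupp.mem_support_iff.mp (a.support.max'_mem _)
  have support_subset : a.support ⊆ Finset.range (M + 1) := fun k hk =>
    Finset.mem_range_succ_iff.mpr (a.support.le_max' k hk)
  intro b
  obtain ⟨u, hu⟩ := hD M a ha_M b
  refine ⟨u, ?_⟩
  rw [Finsupp.linearCombination_apply,
    Finsupp.sum_of_support_subset a support_subset _ fun _ _ => by simp]
  simpa [Module.End.pow_apply] using hu

theorem surjective_of_mem_diffOpLE (hD : LinearlySurjective D) {P : Module.End C F} {n : ℕ}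
    (hP : P ∈ diffOpLE F D n) (hP0 : P ≠ 0) :
    Function.Surjective P := by
  obtain ⟨a, -, rfl⟩ := (Finsupp.mem_span_image_iff_linearCombination F).mp hP
  refine hD.surjective_linearCombination ?_
  rintro rfl
  exact hP0 (map_zero _)

theorem linearIndependent_pow (hD : LinearlySurjective D) :
    LinearIndependent F ((D : Module.End C F) ^ ·) := by
  refine linearIndependent_iff.mpr fun a ha => ?_
  by_contra ha0
  obtain ⟨u, hu⟩ := hD.surjective_linearCombination (C := C) ha0 1
  exact zero_ne_one (by rwa [ha] at hu)

theorem linearIndependent_pow_domMulAct (hD : LinearlySurjective D) :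
    LinearIndependent Fᵈᵐᵃ ((D : Module.End C F) ^ ·) := by
  refine linearIndependent_of_notMem_span_Iio fun n => ?_
  cases n with
  | zero => simp
  | succ n =>
    rw [Set.Iio_add_one_eq_Iic]
    change _ ∉ diffOpLE Fᵈᵐᵃ D n
    rw [mem_diffOpLE_domMulAct_iff]
    exact hD.linearIndependent_pow.notMem_span_image (by simp)

theorem not_finite (hD : LinearlySurjective D) : ¬ Module.Finite C F := by
  intro hfin
  have D_surjective : Function.Surjective (D : Module.End C F) := fun b => by
    obtain ⟨u, hu⟩ := hD 1 (fun n => if n = 1 then 1 else 0) (by simp) b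
    exact ⟨u, by simpa [Finset.sum_range_succ] using hu⟩
  have D_injective := OrzechProperty.injective_of_surjective_endomorphism _ D_surjective
  exact one_ne_zero (D_injective (by simp : (D : Module.End C F) 1 = (D : Module.End C F) 0))

end LinearlySurjective

end LinearlySurjective

section MatrixOperators

open scoped Matrix

variable {R V ι κ : Type*} [Semiring R] [AddCommMonoid V] [Module R V] [Fintype κ]

/-- The operator `u ↦ M u` on column vectors defined by a matrix `M` of operators. -/
def matrixOp (M : Matrix ι κ (Module.End R V)) : (κ → V) →ₗ[R] ι → V :=
  LinearMap.pi fun i => ∑ j, M i j ∘ₗ LinearMap.proj j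

variable {M : Matrix ι κ (Module.End R V)}

theorem matrixOp_apply (u : κ → V) (i : ι) : matrixOp M u i = ∑ j, M i j (u j) := by
  simp [matrixOp]

theorem matrixOp_apply_apply (x : κ → Module.End R V) (b : V) :
    matrixOp M (fun j => x j b) = fun i => (M *ᵥ x) i b := by
  ext i
  simp [matrixOp_apply, Matrix.mulVec, dotProduct]

theorem sum_apply_matrixOp [Fintype ι] (x : ι → Module.End R V) (u : κ → V) :
    ∑ i, x i (matrixOp M u i) = ∑ j, (x ᵥ* M) j (u j) := by
  simp only [matrixOp_apply, map_sum, Matrix.vecMul, dotProduct, LinearMap.sum_apply,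
    Module.End.mul_apply]
  exact Finset.sum_comm

end MatrixOperators

section FiniteIndex

open scoped Matrix

variable {C F ι κ : Type*} [CommRing C] [Field F] [Algebra C F] [Fintype ι] [Fintype κ]
  {D : Derivation C F F} {M : Matrix ι κ (Module.End C F)} {N : ℕ}

theorem exists_surjective_vecMul_eq_zero (hD : LinearlySurjective D)
    (hM : ∀ i j, M i j ∈ diffOpLE F D N) (hcard : Fintype.card κ < Fintype.card ι) :
    ∃ x : ι → Module.End C F, (∃ i, Function.Surjective (x i)) ∧ x ᵥ* M = 0 := by
  have hlin : IsLinearMap F fun x : ι → Module.End C F => x ᵥ* M :=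
    ⟨Matrix.add_vecMul M, fun a x => Matrix.smul_vecMul a x M⟩
  obtain ⟨x, hx0, ⟨n, hx⟩, hxM⟩ :=
    exists_ne_zero_map_eq_zero_of_card_lt hD.linearIndependent_pow hcard hlin N
      fun n x hx j => sum_mem fun i _ => mul_mem_diffOpLE (hx i) (hM i j)
  obtain ⟨i, hi⟩ := Function.ne_iff.mp hx0
  exact ⟨x, ⟨i, hD.surjective_of_mem_diffOpLE (hx i) hi⟩, hxM⟩

theorem exists_surjective_mulVec_eq_zero (hD : LinearlySurjective D)
    (hM : ∀ i j, M i j ∈ diffOpLE F D N) (hcard : Fintype.card ι < Fintype.card κ) :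
    ∃ x : κ → Module.End C F, (∃ j, Function.Surjective (x j)) ∧ M *ᵥ x = 0 := by
  have hlin : IsLinearMap Fᵈᵐᵃ fun x : κ → Module.End C F => M *ᵥ x := by
    refine ⟨Matrix.mulVec_add M, fun c x => ?_⟩
    ext i u
    simp [Matrix.mulVec, dotProduct, DomMulAct.smul_linearMap_apply]
  have order_mulVec_le (n : ℕ) (x : κ → Module.End C F) (hx : ∀ j, x j ∈ diffOpLE Fᵈᵐᵃ D n)
      (i : ι) : (M *ᵥ x) i ∈ diffOpLE Fᵈᵐᵃ D (n + N) := by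
    simp only [mem_diffOpLE_domMulAct_iff] at hx ⊢
    rw [add_comm]
    exact sum_mem fun j _ => mul_mem_diffOpLE (hM i j) (hx j)
  obtain ⟨x, hx0, ⟨n, hx⟩, hMx⟩ :=
    exists_ne_zero_map_eq_zero_of_card_lt hD.linearIndependent_pow_domMulAct hcard hlin N
      order_mulVec_le
  obtain ⟨j, hj⟩ := Function.ne_iff.mp hx0
  exact ⟨x, ⟨j, hD.surjective_of_mem_diffOpLE (mem_diffOpLE_domMulAct_iff.mp (hx j)) hj⟩, hMx⟩

theorem card_le_card_of_finite_ker (hD : LinearlySurjective D)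
    (hM : ∀ i j, M i j ∈ diffOpLE F D N)
    (hfin : Module.Finite C (LinearMap.ker (matrixOp M))) :
    Fintype.card κ ≤ Fintype.card ι := by
  by_contra! hcard
  obtain ⟨x, ⟨j, hj⟩, hMx⟩ := exists_surjective_mulVec_eq_zero hD hM hcard
  have mem_ker (b : F) : (fun k => x k b) ∈ LinearMap.ker (matrixOp M) := by
    rw [LinearMap.mem_ker, matrixOp_apply_apply, hMx]
    rfl
  have proj_surjective :
      Function.Surjective (LinearMap.proj j ∘ₗ (LinearMap.ker (matrixOp M)).subtype) := fun b => by
    obtain ⟨u, rfl⟩ := hj b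
    exact ⟨⟨_, mem_ker u⟩, rfl⟩
  exact hD.not_finite (Module.Finite.of_surjective _ proj_surjective)

theorem card_le_card_of_finite_quotient_range (hD : LinearlySurjective D)
    (hM : ∀ i j, M i j ∈ diffOpLE F D N)
    (hfin : Module.Finite C ((ι → F) ⧸ LinearMap.range (matrixOp M))) :
    Fintype.card ι ≤ Fintype.card κ := by
  classical
  by_contra! hcard
  obtain ⟨x, ⟨i, hi⟩, hxM⟩ := exists_surjective_vecMul_eq_zero hD hM hcard
  let φ : (ι → F) →ₗ[C] F := LinearMap.lsum C (fun _ => F) C x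
  have range_le_ker : LinearMap.range (matrixOp M) ≤ LinearMap.ker φ := by
    rintro _ ⟨u, rfl⟩
    simp [φ, sum_apply_matrixOp, hxM]
  have φ_surjective : Function.Surjective φ := fun b => by
    obtain ⟨u, rfl⟩ := hi b
    exact ⟨Pi.single i u, LinearMap.lsum_piSingle _ _ _ _ _ _⟩
  have lift_surjective := (Submodule.range_liftQ _ φ range_le_ker).trans
    (LinearMap.range_eq_top.mpr φ_surjective)
  exact hD.not_finite (Module.Finite.of_surjective _ (LinearMap.range_eq_top.mp lift_surjective))

end FiniteIndex

section DifferentialField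

variable {F : Type*} [Field F] {d : F → F}

/-- A derivation `d` of `F` killing the subfield `C`, as a bundled `C`-linear derivation. -/
def IsDerivation.toDerivation (hd : IsDerivation d) (C : Subfield F) (hC : ∀ c ∈ C, d c = 0) :
    Derivation C F F :=
  Derivation.mk'
    { toFun := d
      map_add' := hd.map_add
      map_smul' := fun c u => by simp [Subfield.smul_def, hd.leibniz, hC c c.2] }
    fun a b => by simp [hd.leibniz, mul_comm, add_comm]

theorem matrixOp_sum_smul_pow_toDerivation (hd : IsDerivation d) (C : Subfield F)
    (hC : ∀ c ∈ C, d c = 0) {m l : ℕ} (N : ℕ) (a : Fin m → Fin l → ℕ → F) (u : Fin l → F) :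
    matrixOp (Matrix.of fun i j => ∑ n ∈ Finset.range (N + 1),
      a i j n • (hd.toDerivation C hC : Module.End C F) ^ n) u = rectDiffOp d N a u := by
  ext i
  simp only [matrixOp_apply, rectDiffOp, Matrix.of_apply, LinearMap.sum_apply,
    LinearMap.smul_apply, Module.End.pow_apply, smul_eq_mul]
  rfl

end DifferentialField

theorem stmt_5_general {F : Type*} [Field F] {d : F → F} (hd : IsDerivation d)
    (hsurj : LinearlySurjective d)
    {C : Subfield F} (hC : ∀ x : F, x ∈ C ↔ d x = 0)
    {m l N : ℕ} {a : Fin m → Fin l → ℕ → F}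
    {Ker : Submodule C (Fin l → F)} {Im : Submodule C (Fin m → F)}
    (hKer : ∀ u : Fin l → F, u ∈ Ker ↔ rectDiffOp d N a u = 0)
    (hIm : ∀ v : Fin m → F, v ∈ Im ↔ ∃ u : Fin l → F, rectDiffOp d N a u = v)
    (hfinKer : Module.Finite C Ker)
    (hfinCoker : Module.Finite C ((Fin m → F) ⧸ Im)) :
    m = l := by
  let D := hd.toDerivation C fun c => (hC c).mp
  let M : Matrix (Fin m) (Fin l) (Module.End C F) :=
    Matrix.of fun i j => ∑ n ∈ Finset.range (N + 1), a i j n • (D : Module.End C F) ^ n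
  have hD : LinearlySurjective D := hsurj
  have hM (i j) : M i j ∈ diffOpLE F D N := sum_mem fun n hn =>
    Submodule.smul_mem _ _ (pow_mem_diffOpLE (Finset.mem_range_succ_iff.mp hn))
  have matrixOp_M : ∀ u, matrixOp M u = rectDiffOp d N a u :=
    matrixOp_sum_smul_pow_toDerivation hd C _ N a
  obtain rfl : Ker = LinearMap.ker (matrixOp M) := by
    ext u; rw [hKer, LinearMap.mem_ker, matrixOp_M]
  obtain rfl : Im = LinearMap.range (matrixOp M) := by
    ext v; simp only [hIm, LinearMap.mem_range, matrixOp_M]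
  have l_le_m := card_le_card_of_finite_ker hD hM hfinKer
  have m_le_l := card_le_card_of_finite_quotient_range hD hM hfinCoker
  simpa using le_antisymm m_le_l l_le_m

/-- Let `F` be a linearly closed differential field of characteristic zero with constants
`C`, and let `M : F^ℓ → F^m` be an `m×ℓ` matrix differential operator over `F`.  If
`ker M` is finite-dimensional over `C` and the image `M(F^ℓ)` has finite codimension over
`C` in `F^m`, then necessarily `m = ℓ`. -/
theorem stmt_5 (F : Type*) [Field F] [CharZero F] (d : F → F) (hd : IsDerivation d)
    (hlc : LinearlyClosed d)
    (C : Subfield F) (hC : ∀ x : F, x ∈ C ↔ d x = 0)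
    (m l N : ℕ) (a : Fin m → Fin l → ℕ → F)
    (Ker : Submodule C (Fin l → F)) (Im : Submodule C (Fin m → F))
    (hKer : ∀ u : Fin l → F, u ∈ Ker ↔ rectDiffOp d N a u = 0)
    (hIm : ∀ v : Fin m → F, v ∈ Im ↔ ∃ u : Fin l → F, rectDiffOp d N a u = v)
    (hfinKer : Module.Finite C Ker)
    (hfinCoker : Module.Finite C ((Fin m → F) ⧸ Im)) :
    m = l := by
  exact stmt_5_general hd hlc.linearlySurjective hC hKer hIm hfinKer hfinCoker
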